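/- Let G be a countable group acting on a countable tree T such that the orbit equivalence relation E_G^{Geo(T)} of G acting on the space of infinite geodesics is smooth. Then E_G^{∂T} is Borel bireducible with E_{G×ℕ}^{Geo(T)}, which is Borel bireducible with the equivalence relation E_ℕ^{Geo(T)/G} induced by the shift on the quotient Geo(T)/G; the latter is Borel hyperfinite, and hence E_G^{∂T} is Borel hyperfinite. -/

import Mathlib

open MeasureTheory Function Filter

/-! ### Countable Borel equivalence relations -/

section CBER

variable {X Y : Type*} [MeasurableSpace X] [MeasurableSpace Y]

/-- A countable Borel equivalence relation on a standard Borel space. -/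
def IsCBER (E : X → X → Prop) : Prop :=
  Equivalence E ∧ MeasurableSet {p : X × X | E p.1 p.2} ∧ ∀ x : X, {y | E x y}.Countable

/-- `B` meets every `E`-class in exactly one point. -/
def IsTransversal (E : X → X → Prop) (B : Set X) : Prop :=
  ∀ x : X, ∃! y : X, y ∈ B ∧ E x y

/-- A CBER is smooth if it admits a Borel transversal. -/
def SmoothRel (E : X → X → Prop) : Prop :=
  ∃ B : Set X, MeasurableSet B ∧ IsTransversal E B

/-- A Borel equivalence relation all of whose classes are finite. -/
def IsFiniteBorelEquivalence (E : X → X → Prop) : Prop :=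
  Equivalence E ∧ MeasurableSet {p : X × X | E p.1 p.2} ∧ ∀ x : X, {y | E x y}.Finite

/-- A CBER is (Borel) hyperfinite if it is the increasing union of a sequence of
Borel equivalence relations with finite classes. -/
def Hyperfinite (E : X → X → Prop) : Prop :=
  ∃ F : ℕ → X → X → Prop,
    (∀ i, IsFiniteBorelEquivalence (F i)) ∧
    (∀ i x y, F i x y → F (i + 1) x y) ∧
    (∀ x y, E x y ↔ ∃ i, F i x y)

/-- Borel reducibility of equivalence relations. -/
def BorelReducible (E : X → X → Prop) (F : Y → Y → Prop) : Prop :=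
  ∃ f : X → Y, Measurable f ∧ ∀ x x' : X, E x x' ↔ F (f x) (f x')

/-- Borel bireducibility of equivalence relations. -/
def BorelBireducible (E : X → X → Prop) (F : Y → Y → Prop) : Prop :=
  BorelReducible E F ∧ BorelReducible F E

/-- The saturation `[A]_E` of a set `A`: the smallest `E`-invariant set containing `A`. -/
def Saturation (E : X → X → Prop) (A : Set X) : Set X :=
  {x : X | ∃ a ∈ A, E x a}

end CBER

/-! ### ℓ¹ machinery, amenability of CBERs -/

section Amen

variable {X : Type*} [MeasurableSpace X]

/-- ℓ¹ distance between two summable functions. -/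
noncomputable def l1dist {A : Type*} (p q : A → ℝ) : ℝ :=
  ∑' a : A, |p a - q a|

/-- `p` is a probability measure concentrated on the `E`-class of `x`
(identified with its density). -/
def IsProbOnClass (E : X → X → Prop) (p : X → ℝ) (x : X) : Prop :=
  (∀ y, 0 ≤ p y) ∧ (∀ y, p y ≠ 0 → E x y) ∧ HasSum p 1

/-- A CBER is Borel amenable if there is a sequence of Borel assignments of probability
measures on the classes which are asymptotically invariant. -/
def BorelAmenable (E : X → X → Prop) : Prop :=
  ∃ p : ℕ → X → X → ℝ,
    (∀ i x, IsProbOnClass E (p i x) x) ∧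
    (∀ i, Measurable fun q : X × X => p i q.1 q.2) ∧
    (∀ x y, E x y → ∀ ε : ℝ, 0 < ε → ∀ᶠ i in atTop, l1dist (p i x) (p i y) < ε)

/-- A CBER is Borel 2-amenable if there is a double sequence of Borel assignments of
probability measures on the classes which are asymptotically invariant in the
iterated-limit sense. -/
def Borel2Amenable (E : X → X → Prop) : Prop :=
  ∃ p : ℕ → ℕ → X → X → ℝ,
    (∀ i j x, IsProbOnClass E (p i j x) x) ∧
    (∀ i j, Measurable fun q : X × X => p i j q.1 q.2) ∧
    (∀ x y, E x y → ∀ ε : ℝ, 0 < ε →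
      ∀ᶠ i in atTop, ∀ᶠ j in atTop, l1dist (p i j x) (p i j y) < ε)

/-- `E` is μ-hyperfinite: hyperfinite off a μ-null set. -/
def MuHyperfinite (E : X → X → Prop) (μ : Measure X) : Prop :=
  ∃ A : Set X, MeasurableSet A ∧ μ Aᶜ = 0 ∧ Hyperfinite (fun a b : A => E a b)

/-- `E` is μ-amenable: Borel amenable off a μ-null set. -/
def MuAmenable (E : X → X → Prop) (μ : Measure X) : Prop :=
  ∃ A : Set X, MeasurableSet A ∧ μ Aᶜ = 0 ∧ BorelAmenable (fun a b : A => E a b)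

/-- `E` is μ-2-amenable: Borel 2-amenable off a μ-null set. -/
def Mu2Amenable (E : X → X → Prop) (μ : Measure X) : Prop :=
  ∃ A : Set X, MeasurableSet A ∧ μ Aᶜ = 0 ∧ Borel2Amenable (fun a b : A => E a b)

/-- `E` is measure-hyperfinite: μ-hyperfinite for every Borel probability measure μ. -/
def MeasureHyperfinite (E : X → X → Prop) : Prop :=
  ∀ μ : Measure X, IsProbabilityMeasure μ → MuHyperfinite E μ

end Amen

/-! ### Reiter functions and uniform coamenability -/

section Reiter

/-- A (finitely or infinitely supported) probability function on a countable set. -/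
def IsProbFun {A : Type*} (p : A → ℝ) : Prop :=
  (∀ a, 0 ≤ p a) ∧ HasSum p 1

/-- The pushforward of `p : Prob(G)` under the orbit map `g ↦ g • x`. -/
noncomputable def pushMeasure {G X : Type*} [Group G] [MulAction G X]
    (p : G → ℝ) (x : X) : X → ℝ :=
  fun y => ∑' g : {g : G // g • x = y}, p g.1

/-- `p` is an `(S, ε)`-Reiter function for the action `G ↷ X`. -/
def IsReiterFun {G : Type*} (X : Type*) [Group G] [MulAction G X]
    (S : Finset G) (ε : ℝ) (p : G → ℝ) : Prop :=
  IsProbFun p ∧ ∀ s ∈ S, ∀ x : X, l1dist (pushMeasure p x) (pushMeasure p (s • x)) < ε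

/-- A subgroup `H ≤ G` is uniformly coamenable if the action `G ↷ G/H` admits
`(S, ε)`-Reiter functions for all finite `S ⊆ G` and all `ε > 0`. -/
def UniformlyCoamenable {G : Type*} [Group G] (H : Subgroup G) : Prop :=
  ∀ (S : Finset G) (ε : ℝ), 0 < ε → ∃ p : G → ℝ, IsReiterFun (G ⧸ H) S ε p

/-- The Reiter criterion for amenability of a countable group `Q`. -/
def ReiterAmenable (Q : Type*) [Group Q] : Prop :=
  ∀ (S : Finset Q) (ε : ℝ), 0 < ε → ∃ q : Q → ℝ, IsProbFun q ∧
    ∀ s ∈ S, l1dist q (fun x => q (s⁻¹ * x)) < ε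

end Reiter

/-! ### Trees, geodesics and the Gromov boundary -/

section Tree

variable {V : Type*} (T : SimpleGraph V)

/-- The space of infinite geodesics in the graph `T`. -/
def Geo : Set (ℕ → V) :=
  {v | Function.Injective v ∧ ∀ n, T.Adj (v n) (v (n + 1))}

/-- The shift map (the action of the generator of the monoid ℕ) on `Geo T`. -/
def geoShift (v : Geo T) : Geo T :=
  ⟨fun n => v.1 (n + 1),
   fun a b h => by have := v.2.1 h; omega,
   fun n => v.2.2 (n + 1)⟩

/-- Tail equivalence: the orbit equivalence relation of the shift action of the
monoid ℕ on `Geo T`, i.e. the equivalence relation generated by `v ∼ m • v`. -/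
def tailRel : Geo T → Geo T → Prop :=
  Relation.EqvGen fun a b => ∃ m : ℕ, b = (geoShift T)^[m] a

def tailSetoid : Setoid (Geo T) :=
  ⟨tailRel T, Relation.EqvGen.is_equivalence _⟩

/-- The Gromov boundary `∂T = Geo(T)/ℕ`. -/
def Bdry : Type _ := Quotient (tailSetoid T)

instance [MeasurableSpace V] : MeasurableSpace (Bdry T) :=
  inferInstanceAs (MeasurableSpace (Quotient (tailSetoid T)))

variable {G : Type*} [Group G] [MulAction G V]

/-- The action `G ↷ V` is by graph automorphisms of `T`. -/
def IsGraphAction (G : Type*) [Group G] [MulAction G V] : Prop :=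
  ∀ (g : G) (v w : V), T.Adj v w ↔ T.Adj (g • v) (g • w)

variable {T}

/-- The coordinatewise action of `G` on `Geo T`. -/
def geoSmul (h : IsGraphAction T G) (g : G) (v : Geo T) : Geo T :=
  ⟨fun n => g • v.1 n, (MulAction.injective g).comp v.2.1,
   fun n => (h g _ _).mp (v.2.2 n)⟩

lemma geoShift_geoSmul (h : IsGraphAction T G) (g : G) (v : Geo T) :
    geoShift T (geoSmul h g v) = geoSmul h g (geoShift T v) := rfl

lemma iterate_geoShift_geoSmul (h : IsGraphAction T G) (g : G) (m : ℕ) (v : Geo T) :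
    (geoShift T)^[m] (geoSmul h g v) = geoSmul h g ((geoShift T)^[m] v) := by
  induction m generalizing v with
  | zero => rfl
  | succ m ih =>
      rw [Function.iterate_succ_apply, Function.iterate_succ_apply,
        geoShift_geoSmul, ih]

lemma tailRel_geoSmul (h : IsGraphAction T G) (g : G) {v w : Geo T}
    (hvw : tailRel T v w) : tailRel T (geoSmul h g v) (geoSmul h g w) := by
  induction hvw with
  | rel a b hab =>
      obtain ⟨m, rfl⟩ := hab
      exact Relation.EqvGen.rel _ _ ⟨m, (iterate_geoShift_geoSmul h g m a).symm⟩
  | refl a => exact Relation.EqvGen.refl _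
  | symm a b _ ih => exact Relation.EqvGen.symm _ _ ih
  | trans a b c _ _ ih1 ih2 => exact Relation.EqvGen.trans _ _ _ ih1 ih2

/-- The induced action of `G` on the Gromov boundary `∂T`. -/
def bdrySmul (h : IsGraphAction T G) (g : G) : Bdry T → Bdry T :=
  Quotient.map (geoSmul h g) (fun _ _ hab => tailRel_geoSmul h g hab)

/-- The orbit equivalence relation `E_G^{∂T}` of the boundary action. -/
def bdryRel (h : IsGraphAction T G) : Bdry T → Bdry T → Prop :=
  fun x y => ∃ g : G, bdrySmul h g x = y

/-- The orbit equivalence relation `E_G^{Geo(T)}`. -/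
def geoRel (h : IsGraphAction T G) : Geo T → Geo T → Prop :=
  fun v w => ∃ g : G, geoSmul h g v = w

end Tree

/-! ### Stabilizers of geodesics and of their initial segments -/

section Stab

variable (G : Type*) {V : Type*} [Group G] [MulAction G V]

/-- The (pointwise) stabilizer of an infinite sequence of vertices. -/
def ptwiseStab (v : ℕ → V) : Subgroup G where
  carrier := {g : G | ∀ k : ℕ, g • v k = v k}
  one_mem' := fun k => one_smul _ _
  mul_mem' := fun {a b} ha hb k => by rw [mul_smul, hb k, ha k]
  inv_mem' := fun {a} ha k => inv_smul_eq_iff.mpr (ha k).symm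

/-- The stabilizer of the initial segment `(v 0, …, v n)`. -/
def initStab (v : ℕ → V) (n : ℕ) : Subgroup G where
  carrier := {g : G | ∀ k ≤ n, g • v k = v k}
  one_mem' := fun k _ => one_smul _ _
  mul_mem' := fun {a b} ha hb k hk => by rw [mul_smul, hb k hk, ha k hk]
  inv_mem' := fun {a} ha k hk => inv_smul_eq_iff.mpr (ha k hk).symm

/-- The stabilizer of a finite geodesic given as a tuple of vertices. -/
def finStab {n : ℕ} (f : Fin n → V) : Subgroup G where
  carrier := {g : G | ∀ i : Fin n, g • f i = f i}
  one_mem' := fun i => one_smul _ _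
  mul_mem' := fun {a b} ha hb i => by rw [mul_smul, hb i, ha i]
  inv_mem' := fun {a} ha i => inv_smul_eq_iff.mpr (ha i).symm

end Stab

/-! ### Orbit equivalence relations of monoid actions -/

section MonoidOrbit

/-- The orbit equivalence relation of a monoid action: the equivalence relation
generated by `x ∼ m • x`. -/
def monOrbitRel (M : Type*) {X : Type*} [Monoid M] [MulAction M X] :
    X → X → Prop :=
  Relation.EqvGen fun x y => ∃ m : M, y = m • x

end MonoidOrbit

/-! ### STATEMENT 14 -/

section Stmt14

variable {V : Type*} {T : SimpleGraph V} {G : Type*} [Group G] [MulAction G V]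

lemma geoSmul_one (hact : IsGraphAction T G) (v : Geo T) :
    geoSmul hact (1 : G) v = v :=
  Subtype.ext (funext fun n => one_smul G (v.1 n))

lemma geoSmul_mul (hact : IsGraphAction T G) (a b : G) (v : Geo T) :
    geoSmul hact (a * b) v = geoSmul hact a (geoSmul hact b v) :=
  Subtype.ext (funext fun n => mul_smul a b (v.1 n))

/-- The `G`-orbit setoid on `Geo T`. -/
def geoSetoidG (hact : IsGraphAction T G) : Setoid (Geo T) :=
  ⟨geoRel hact,
    ⟨fun v => ⟨1, geoSmul_one hact v⟩,
     fun {v w} h => by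
        obtain ⟨g, rfl⟩ := h
        exact ⟨g⁻¹, by rw [← geoSmul_mul, inv_mul_cancel, geoSmul_one]⟩,
     fun {u v w} h1 h2 => by
        obtain ⟨g, rfl⟩ := h1
        obtain ⟨g', rfl⟩ := h2
        exact ⟨g' * g, geoSmul_mul hact g' g u⟩⟩⟩

/-- The quotient space `Geo(T)/G`. -/
abbrev GeoQuotG (hact : IsGraphAction T G) : Type _ :=
  Quotient (geoSetoidG hact)

/-- The shift descends to the quotient `Geo(T)/G`. -/
def shiftQuotG (hact : IsGraphAction T G) : GeoQuotG hact → GeoQuotG hact :=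
  Quotient.map (geoShift T)
    (fun a b h => by
      obtain ⟨g, rfl⟩ := h
      exact ⟨g, (geoShift_geoSmul hact g a).symm⟩)

/-- The equivalence relation `E_ℕ^{Geo(T)/G}` induced by the shift on `Geo(T)/G`. -/
def shiftQuotRel (hact : IsGraphAction T G) : GeoQuotG hact → GeoQuotG hact → Prop :=
  Relation.EqvGen fun x y => ∃ m : ℕ, y = (shiftQuotG hact)^[m] x

/-- The orbit equivalence relation `E_{G×ℕ}^{Geo(T)}` of the commuting actions of `G`
and of the shift monoid ℕ. -/
def geoRelGN (hact : IsGraphAction T G) : Geo T → Geo T → Prop :=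
  Relation.EqvGen fun v w => ∃ q : G × ℕ, w = geoSmul hact q.1 ((geoShift T)^[q.2] v)

end Stmt14

/-!
A tail equivalence relation of a countable-to-one Borel map `f` is hyperfinite (Dougherty, Jackson
and Kechris): embed the space in `[0, 1]` by a Borel injection `u` and let the marker sets collect
the points whose `u`-value approaches the limit inferior of `u` along their forward orbit. Either
the limit inferior is attained infinitely often, and tail equivalent points share their first marker
because `u` is injective, or the markers vanish and the orbits of tail equivalent points merge
before reaching the `n`-th marker set, for large `n`. So the relation is an increasing union of
the kernels of the first-hit maps, and each step of this chain is encoded by finite lists of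
integers.

A Borel selector for the orbits of `G` on `Geo(T)` makes `Geo(T)/G` countably separated, and a ray
is determined by its shift and its origin, so the shift on `Geo(T)/G` is countable-to-one. The
relation on `∂T` is compared with these through a Borel selector for tail equivalence: in a forest
a ray is determined by its origin and its tail class, since each of its vertices can be read off
from the paths joining the origin to far away points of any tail equivalent ray. One therefore picks
a root in each component and sends a ray to the tail equivalent ray issuing from the root.
-/

section Hyperfinite

variable {X Y : Type*} [MeasurableSpace X] [MeasurableSpace Y]

/- Replacing every code `k` by `max k n` identifies the codes up to `n` and no others, so it leaves
finitely many codes per class and gives a relation that grows with `n`. -/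
lemma isFiniteBorelEquivalence_of_finite_fibers {ι : Type*} [Finite ι] {R : Setoid X}
    (hR : MeasurableSet {q : X × X | R q.1 q.2}) {c : X → ι → ℕ} (hc : Measurable c)
    (hfin : ∀ x a, {y | R x y ∧ c y = a}.Finite) (n : ℕ) :
    IsFiniteBorelEquivalence fun x y => R x y ∧ ∀ i, max (c x i) n = max (c y i) n := by
  refine ⟨⟨fun x => ⟨R.refl x, fun i => rfl⟩, fun h => ⟨R.symm h.1, fun i => (h.2 i).symm⟩,
    fun h h' => ⟨R.trans h.1 h'.1, fun i => (h.2 i).trans (h'.2 i)⟩⟩, ?_, fun x => ?_⟩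
  · have hpairs : MeasurableSet {q : (ι → ℕ) × (ι → ℕ) | ∀ i, max (q.1 i) n = max (q.2 i) n} :=
      .of_discrete
    exact hR.inter ((hc.prodMap hc) hpairs)
  · have hcodes : {a : ι → ℕ | ∀ i, a i ∈ Set.Iic (max (c x i) n)}.Finite :=
      Set.Finite.pi' fun i => Set.finite_Iic _
    refine (hcodes.biUnion fun a _ => hfin x a).subset fun y hy => ?_
    simp only [Set.mem_iUnion₂]
    exact ⟨c y, fun i => (le_max_left _ n).trans (hy.2 i).ge, hy.1, rfl⟩

lemma Hyperfinite.comap {E : X → X → Prop} {F : Y → Y → Prop} (hF : Hyperfinite F)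
    {p : X → Y} (hp : Measurable p) {N : X → ℕ} (hN : Measurable N)
    (hpN : Injective fun x => (p x, N x)) (hEF : ∀ x x', E x x' ↔ F (p x) (p x')) :
    Hyperfinite E := by
  obtain ⟨R, hR, hRsucc, hFR⟩ := hF
  have hRmono : Monotone R := monotone_nat_of_le_succ hRsucc
  refine ⟨fun n x y => R n (p x) (p y) ∧ ∀ _ : Unit, max (N x) n = max (N y) n,
    fun n => ?_, ?_, fun x y => ?_⟩
  · refine isFiniteBorelEquivalence_of_finite_fibers (R := Setoid.comap p ⟨R n, (hR n).1⟩)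
      ((hp.prodMap hp) (hR n).2.1) (measurable_pi_lambda _ fun _ => hN)
      (fun x a => ?_) n
    refine Set.Finite.of_finite_image (((hR n).2.2 (p x)).subset (Set.image_subset_iff.2
      fun y hy => hy.1)) fun y hy z hz hyz => hpN (Prod.ext hyz ?_)
    exact congrFun (hy.2.trans hz.2.symm) ()
  · exact fun n x y h => ⟨hRsucc n _ _ h.1, fun u => by have := h.2 u; omega⟩
  · rw [hEF, hFR]
    refine ⟨fun ⟨n, hn⟩ => ⟨max n (max (N x) (N y)), ?_, fun _ => by simp⟩,
      fun ⟨n, hn⟩ => ⟨n, hn.1⟩⟩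
    exact hRmono (le_max_left _ _) _ _ hn

lemma Hyperfinite.of_injective {E : X → X → Prop} {F : Y → Y → Prop} (hF : Hyperfinite F)
    {p : X → Y} (hp : Measurable p) (hinj : Injective p)
    (hEF : ∀ x x', E x x' ↔ F (p x) (p x')) : Hyperfinite E :=
  hF.comap hp (N := fun _ => 0) measurable_const
    (fun _ _ h => hinj (congrArg Prod.fst h)) hEF

lemma hyperfinite_of_coded_chain {R : ℕ → Setoid X}
    (hR : ∀ n, MeasurableSet {q : X × X | R n q.1 q.2}) (hR₀ : R 0 = ⊥) (hRmono : Monotone R)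
    {d : ℕ → X → ℕ} (hd : ∀ n, Measurable (d n))
    (hRd : ∀ n x y, R (n + 1) x y → (R n x y ↔ d n x = d n y)) :
    Hyperfinite fun x y => ∃ n, R n x y := by
  have hd_eq {n i x y} (hni : n ≤ i) (h : R n x y) : d i x = d i y :=
    (hRd i x y (hRmono (hni.trans i.le_succ) h)).1 (hRmono hni h)
  refine ⟨fun n x y => R n x y ∧ ∀ i : Fin n, max (d i x) n = max (d i y) n,
    fun n => ?_, fun n x y h => ⟨hRmono n.le_succ h.1, fun i => ?_⟩, fun x y => ⟨?_, ?_⟩⟩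
  · refine isFiniteBorelEquivalence_of_finite_fibers (c := fun x (i : Fin n) => d i x) (hR n)
      (measurable_pi_lambda _ fun i => hd i) (fun x a => Set.Subsingleton.finite ?_) n
    rintro y ⟨hxy, hya⟩ z ⟨hxz, hza⟩
    have hdescend : ∀ k ≤ n, R k y z := fun k hk =>
      Nat.decreasingInduction' (fun i hi _ h =>
        (hRd i y z h).2 (congrFun (hya.trans hza.symm) ⟨i, hi⟩)) hk
        ((R n).trans ((R n).symm hxy) hxz)
    have hyz : R 0 y z := hdescend 0 n.zero_le
    rwa [hR₀] at hyz
  · rcases Fin.eq_castSucc_or_eq_last i with ⟨j, rfl⟩ | rfl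
    · have := h.2 j
      simp only [Fin.val_castSucc]
      omega
    · rw [Fin.val_last, hd_eq le_rfl h.1]
  · rintro ⟨n, hn⟩
    have hlarge : ∀ᶠ m in atTop, ∀ i ∈ Finset.range n, max (d i x) (d i y) ≤ m :=
      (eventually_all_finset _).2 fun i _ => eventually_ge_atTop _
    obtain ⟨m, hm, hnm⟩ := (hlarge.and (eventually_ge_atTop n)).exists
    refine ⟨m, hRmono hnm hn, fun i => ?_⟩
    rcases lt_or_ge (i : ℕ) n with hi | hi
    · have := hm i (Finset.mem_range.2 hi)
      omega
    · rw [hd_eq hi hn]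
  · exact fun ⟨n, hn⟩ => ⟨n, hn.1⟩

end Hyperfinite

section TailEquivalence

variable {X : Type*} {f : X → X} {N : X → ℕ} {S : Set X} {x y : X}

/-- Tail equivalence of a map `f`: two points are related if their forward orbits meet, possibly
after different numbers of steps. -/
def TailEquiv (f : X → X) (x y : X) : Prop :=
  ∃ m n : ℕ, f^[m] x = f^[n] y

lemma eqvGen_iterate_iff_tailEquiv :
    Relation.EqvGen (fun a b => ∃ m : ℕ, b = f^[m] a) x y ↔ TailEquiv f x y := by
  refine ⟨fun H => ?_, fun ⟨m, n, h⟩ => ?_⟩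
  · induction H with
    | rel a b hab => exact hab.imp fun m hm => ⟨0, hm.symm⟩
    | refl a => exact ⟨0, 0, rfl⟩
    | symm a b _ ih =>
      obtain ⟨m, n, h⟩ := ih
      exact ⟨n, m, h.symm⟩
    | trans a b c _ _ ihab ihbc =>
      obtain ⟨m, n, hab⟩ := ihab
      obtain ⟨k, l, hbc⟩ := ihbc
      refine ⟨k + m, n + l, ?_⟩
      rw [iterate_add_apply, hab, ← iterate_add_apply, add_comm k n, iterate_add_apply, hbc,
        ← iterate_add_apply]
  · exact .trans _ _ _ (.rel x _ ⟨m, rfl⟩) (.symm _ _ (.rel y _ ⟨n, h⟩))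

/-- The first time at which the forward orbit of `x` under `f` visits `S`, with value `0` if it
never does. -/
noncomputable def hittingTime (f : X → X) (S : Set X) (x : X) : ℕ :=
  sInf {k | f^[k] x ∈ S}

/-- The first point of `S` on the forward orbit of `x` under `f`, with value `x` if there is
none. -/
noncomputable def hittingPoint (f : X → X) (S : Set X) (x : X) : X :=
  f^[hittingTime f S x] x

/-- An injective code in `ℕ` for the list of the `N`-values along the orbit of `x` strictly before
its first visit to `S`. -/
noncomputable def hittingCode (f : X → X) (N : X → ℕ) (S : Set X) (x : X) : ℕ :=
  Encodable.encode (List.ofFn fun i : Fin (hittingTime f S x) => N (f^[i] x))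

lemma hittingPoint_mem (h : ∃ k, f^[k] x ∈ S) : hittingPoint f S x ∈ S :=
  Nat.sInf_mem h

lemma hittingPoint_iterate {m : ℕ} (h : m ≤ hittingTime f S x) :
    hittingPoint f S (f^[m] x) = hittingPoint f S x := by
  have htime : hittingTime f S (f^[m] x) + m = hittingTime f S x := by
    simpa only [hittingTime, ← iterate_add_apply] using Nat.sInf_add h
  rw [hittingPoint, ← iterate_add_apply, htime, hittingPoint]

lemma hittingPoint_univ : hittingPoint f Set.univ x = x := by
  simp [hittingPoint, hittingTime]

lemma le_hittingTime (h : ∃ k, f^[k] x ∈ S) {m : ℕ} (hm : ∀ i < m, f^[i] x ∉ S) :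
    m ≤ hittingTime f S x :=
  le_csInf h fun _ hk => not_lt.1 fun hkm => hm _ hkm hk

lemma hittingPoint_hittingPoint {S' : Set X} (hS : S' ⊆ S) (h : ∃ k, f^[k] x ∈ S') :
    hittingPoint f S' (hittingPoint f S x) = hittingPoint f S' x :=
  hittingPoint_iterate (Nat.sInf_le (hS (hittingPoint_mem h)))

lemma eq_of_iterate_eq (hfN : Injective fun x => (f x, N x)) {k : ℕ} (hk : f^[k] x = f^[k] y)
    (hN : ∀ i < k, N (f^[i] x) = N (f^[i] y)) : x = y :=
  Nat.decreasingInduction' (P := fun i => f^[i] x = f^[i] y)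
    (fun i hi _ h => hfN (Prod.ext (by simpa only [iterate_succ_apply'] using h) (hN i hi)))
    k.zero_le hk

lemma eq_of_hittingPoint_eq_of_hittingCode_eq (hfN : Injective fun x => (f x, N x))
    (hpoint : hittingPoint f S x = hittingPoint f S y)
    (hcode : hittingCode f N S x = hittingCode f N S y) : x = y := by
  have hlist := Encodable.encode_injective hcode
  have htime : hittingTime f S x = hittingTime f S y := by
    simpa using congrArg List.length hlist
  rw [hittingPoint, hittingPoint, htime] at hpoint
  refine eq_of_iterate_eq hfN hpoint fun i hi => ?_
  simpa [htime, hi] using congrArg (·[i]?) hlist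

section Measurability

variable [MeasurableSpace X]

lemma measurable_hittingTime (hf : Measurable f) (hS : MeasurableSet S)
    (h : ∀ x, ∃ k, f^[k] x ∈ S) : Measurable (hittingTime f S) := by
  classical
  have hfind : hittingTime f S = fun x => Nat.find (h x) := funext fun x => Nat.sInf_def (h x)
  exact hfind ▸ measurable_find h fun k => hf.iterate k hS

lemma measurable_hittingPoint (hf : Measurable f) (hS : MeasurableSet S)
    (h : ∀ x, ∃ k, f^[k] x ∈ S) : Measurable (hittingPoint f S) :=
  (measurable_from_prod_countable_right (f := fun q : ℕ × X => f^[q.1] q.2) hf.iterate).comp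
    ((measurable_hittingTime hf hS h).prodMk measurable_id)

lemma measurable_hittingCode (hf : Measurable f) (hN : Measurable N) (hS : MeasurableSet S)
    (h : ∀ x, ∃ k, f^[k] x ∈ S) : Measurable (hittingCode f N S) := by
  have hcode : Measurable fun q : ℕ × X =>
      Encodable.encode (List.ofFn fun i : Fin q.1 => N (f^[i] q.2)) :=
    measurable_from_prod_countable_right fun k =>
      (Measurable.of_discrete (f := fun a : Fin k → ℕ => Encodable.encode (List.ofFn a))).comp
        (measurable_pi_lambda _ fun i => hN.comp (hf.iterate i))
  exact hcode.comp ((measurable_hittingTime hf hS h).prodMk measurable_id)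

lemma Hyperfinite.tailEquiv_of_markers [MeasurableEq X] (hf : Measurable f) (hN : Measurable N)
    (hfN : Injective fun x => (f x, N x)) {S : ℕ → Set X} (hS : ∀ n, MeasurableSet (S n))
    (hS₀ : S 0 = Set.univ) (hSanti : Antitone S) (hrec : ∀ n x, ∃ k, f^[k] x ∈ S n)
    (hmerge : ∀ x y, TailEquiv f x y → ∃ n, hittingPoint f (S n) x = hittingPoint f (S n) y) :
    Hyperfinite (TailEquiv f) := by
  have hpoint (n : ℕ) : Measurable (hittingPoint f (S n)) :=
    measurable_hittingPoint hf (hS n) (hrec n)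
  have hcomp {m n : ℕ} (hmn : m ≤ n) (x : X) :
      hittingPoint f (S n) (hittingPoint f (S m) x) = hittingPoint f (S n) x :=
    hittingPoint_hittingPoint (hSanti hmn) (hrec n x)
  have hTail : TailEquiv f = fun x y => ∃ n, Setoid.ker (hittingPoint f (S n)) x y := by
    ext x y
    exact ⟨hmerge x y, fun ⟨n, hn⟩ => ⟨_, _, hn⟩⟩
  rw [hTail]
  refine hyperfinite_of_coded_chain
    (d := fun n x => hittingCode f N (S (n + 1)) (hittingPoint f (S n) x))
    (fun n => measurableSet_eq_fun ((hpoint n).comp measurable_fst)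
      ((hpoint n).comp measurable_snd)) ?_ (fun m n hmn x y h => ?_)
    (fun n => (measurable_hittingCode hf hN (hS _) (hrec _)).comp (hpoint n))
    fun n x y h => ⟨fun hxy => ?_, fun hxy => ?_⟩
  · exact Setoid.ker_eq_bot_iff.2 fun x y h => by simpa only [hS₀, hittingPoint_univ] using h
  · simp only [Setoid.ker_def] at h ⊢
    rw [← hcomp hmn x, ← hcomp hmn y, h]
  · exact congrArg (hittingCode f N (S (n + 1))) hxy
  · simp only [Setoid.ker_def] at h ⊢
    refine eq_of_hittingPoint_eq_of_hittingCode_eq hfN (S := S (n + 1)) ?_ hxy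
    rw [hcomp n.le_succ, hcomp n.le_succ, h]

end Measurability

end TailEquivalence

section LiminfMarkers

variable {X : Type*} {f : X → X} {u : X → unitInterval} {x : X}

/-- The limit inferior of `u` along the forward orbit of `x` under `f`. -/
noncomputable def orbitLiminf (f : X → X) (u : X → unitInterval) (x : X) : unitInterval :=
  liminf (fun i => u (f^[i] x)) atTop

/-- The points whose forward orbit attains its limit inferior infinitely often. -/
def attainsLiminf (f : X → X) (u : X → unitInterval) : Set X :=
  {x | ∃ᶠ i in atTop, u (f^[i] x) = orbitLiminf f u x}

/-- The Dougherty–Jackson–Kechris markers. Where the limit inferior is attained infinitely often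
they are the points attaining it, and elsewhere the points that approximate it without attaining
it, with a tolerance that decreases with the index; index `0` is reserved for the whole space. -/
def liminfMarker (f : X → X) (u : X → unitInterval) : ℕ → Set X
  | 0 => Set.univ
  | n + 1 => (attainsLiminf f u).ite {x | u x = orbitLiminf f u x}
      {x | u x ≠ orbitLiminf f u x ∧ dist (u x) (orbitLiminf f u x) < 1 / ((n : ℝ) + 1)}

lemma orbitLiminf_iterate (k : ℕ) : orbitLiminf f u (f^[k] x) = orbitLiminf f u x := by
  simpa only [orbitLiminf, ← iterate_add_apply] using liminf_nat_add (fun i => u (f^[i] x)) k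

lemma iterate_mem_attainsLiminf_iff (k : ℕ) :
    f^[k] x ∈ attainsLiminf f u ↔ x ∈ attainsLiminf f u := by
  simp only [attainsLiminf, Set.mem_ofPred_eq, orbitLiminf_iterate, ← iterate_add_apply]
  conv_rhs => rw [← map_add_atTop_eq_nat k, frequently_map]

lemma TailEquiv.orbitLiminf_eq {y : X} (h : TailEquiv f x y) :
    orbitLiminf f u x = orbitLiminf f u y := by
  obtain ⟨m, n, h⟩ := h
  rw [← orbitLiminf_iterate m, h, orbitLiminf_iterate]

lemma TailEquiv.mem_attainsLiminf_iff {y : X} (h : TailEquiv f x y) :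
    x ∈ attainsLiminf f u ↔ y ∈ attainsLiminf f u := by
  obtain ⟨m, n, h⟩ := h
  rw [← iterate_mem_attainsLiminf_iff m, h, iterate_mem_attainsLiminf_iff]

lemma mem_liminfMarker_succ_of_mem (hx : x ∈ attainsLiminf f u) {n : ℕ} :
    x ∈ liminfMarker f u (n + 1) ↔ u x = orbitLiminf f u x := by
  simp [liminfMarker, Set.ite, hx]

lemma mem_liminfMarker_succ_of_notMem (hx : x ∉ attainsLiminf f u) {n : ℕ} :
    x ∈ liminfMarker f u (n + 1) ↔
      u x ≠ orbitLiminf f u x ∧ dist (u x) (orbitLiminf f u x) < 1 / ((n : ℝ) + 1) := by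
  simp [liminfMarker, Set.ite, hx]

lemma antitone_liminfMarker : Antitone (liminfMarker f u) := by
  refine antitone_nat_of_succ_le fun n => ?_
  rcases n with - | n
  · exact Set.subset_univ _
  refine Set.ite_mono _ subset_rfl fun x hx => ⟨hx.1, hx.2.trans_le ?_⟩
  exact Nat.one_div_le_one_div n.le_succ

lemma frequently_dist_orbitLiminf_lt {ε : ℝ} (hε : 0 < ε) :
    ∃ᶠ i in atTop, dist (u (f^[i] x)) (orbitLiminf f u x) < ε :=
  (MapClusterPt.liminf (u := fun i => u (f^[i] x)) (f := atTop)).frequently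
    (Metric.ball_mem_nhds _ hε)

lemma exists_iterate_mem_liminfMarker (n : ℕ) : ∃ k, f^[k] x ∈ liminfMarker f u n := by
  rcases n with - | n
  · exact ⟨0, Set.mem_univ _⟩
  by_cases hx : x ∈ attainsLiminf f u
  · obtain ⟨k, hk⟩ := Frequently.exists hx
    rw [← iterate_mem_attainsLiminf_iff k] at hx
    refine ⟨k, (mem_liminfMarker_succ_of_mem hx).2 (hk.trans (orbitLiminf_iterate k).symm)⟩
  · obtain ⟨k, hclose, hne⟩ := ((frequently_dist_orbitLiminf_lt
      (Nat.one_div_pos_of_nat (n := n))).and_eventually (not_frequently.1 hx)).exists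
    rw [← iterate_mem_attainsLiminf_iff k] at hx
    refine ⟨k, (mem_liminfMarker_succ_of_notMem hx).2 ?_⟩
    rw [orbitLiminf_iterate]
    exact ⟨hne, hclose⟩

lemma eventually_notMem_liminfMarker (hx : x ∉ attainsLiminf f u) :
    ∀ᶠ n in atTop, x ∉ liminfMarker f u n := by
  suffices ∀ᶠ n in atTop, x ∉ liminfMarker f u (n + 1) by
    rwa [← map_add_atTop_eq_nat 1, eventually_map]
  simp only [mem_liminfMarker_succ_of_notMem hx, not_and]
  by_cases hu : u x = orbitLiminf f u x
  · exact .of_forall fun n hne => absurd hu hne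
  · filter_upwards [tendsto_one_div_add_atTop_nhds_zero_nat.eventually_lt_const (dist_pos.2 hu)]
      with n hn _ using hn.not_gt

lemma eventually_le_hittingTime_liminfMarker (hx : x ∉ attainsLiminf f u) (m : ℕ) :
    ∀ᶠ n in atTop, m ≤ hittingTime f (liminfMarker f u n) x := by
  have hescape : ∀ᶠ n in atTop, ∀ i ∈ Finset.range m, f^[i] x ∉ liminfMarker f u n :=
    (eventually_all_finset _).2 fun i _ =>
      eventually_notMem_liminfMarker (mt (iterate_mem_attainsLiminf_iff i).1 hx)
  filter_upwards [hescape] with n hn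
  exact le_hittingTime (exists_iterate_mem_liminfMarker n) fun i hi => hn i (Finset.mem_range.2 hi)

lemma TailEquiv.exists_hittingPoint_liminfMarker_eq (hu : Injective u) {y : X}
    (h : TailEquiv f x y) :
    ∃ n, hittingPoint f (liminfMarker f u n) x = hittingPoint f (liminfMarker f u n) y := by
  by_cases hx : x ∈ attainsLiminf f u
  · have hpoint {z : X} (hz : z ∈ attainsLiminf f u) :
        u (hittingPoint f (liminfMarker f u 1) z) = orbitLiminf f u z :=
      ((mem_liminfMarker_succ_of_mem ((iterate_mem_attainsLiminf_iff _).2 hz)).1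
        (hittingPoint_mem (exists_iterate_mem_liminfMarker 1))).trans (orbitLiminf_iterate _)
    exact ⟨1, hu <| by
      rw [hpoint hx, hpoint (h.mem_attainsLiminf_iff.1 hx), h.orbitLiminf_eq]⟩
  · have hy : y ∉ attainsLiminf f u := mt h.mem_attainsLiminf_iff.2 hx
    obtain ⟨m, k, hmk⟩ := h
    obtain ⟨n, hm, hk⟩ := ((eventually_le_hittingTime_liminfMarker hx m).and
      (eventually_le_hittingTime_liminfMarker hy k)).exists
    exact ⟨n, by rw [← hittingPoint_iterate hm, hmk, hittingPoint_iterate hk]⟩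

section Measurability

variable [MeasurableSpace X]

lemma measurable_orbitLiminf (hf : Measurable f) (hu : Measurable u) :
    Measurable (orbitLiminf f u) :=
  Measurable.liminf fun i => hu.comp (hf.iterate i)

lemma measurableSet_attainsLiminf (hf : Measurable f) (hu : Measurable u) :
    MeasurableSet (attainsLiminf f u) := by
  have hlimsup : attainsLiminf f u =
      limsup (fun i => {x | u (f^[i] x) = orbitLiminf f u x}) atTop :=
    Set.ext fun x => by rw [mem_limsup_iff_frequently_mem]; rfl
  rw [hlimsup]
  exact .measurableSet_limsup fun i =>
    measurableSet_eq_fun (hu.comp (hf.iterate i)) (measurable_orbitLiminf hf hu)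

lemma measurableSet_liminfMarker (hf : Measurable f) (hu : Measurable u) (n : ℕ) :
    MeasurableSet (liminfMarker f u n) := by
  rcases n with - | n
  · exact .univ
  have hL := measurable_orbitLiminf hf hu
  have hattained : MeasurableSet {x | u x = orbitLiminf f u x} := measurableSet_eq_fun hu hL
  exact (measurableSet_attainsLiminf hf hu).ite hattained
    (hattained.compl.inter (measurableSet_lt (hu.dist hL) measurable_const))

lemma exists_measurable_injective_unitInterval [MeasurableSpace.CountablySeparated X] :
    ∃ u : X → unitInterval, Measurable u ∧ Injective u := by
  obtain ⟨e, he, heinj⟩ := MeasurableSpace.measurable_injection_nat_bool_of_countablySeparated X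
  have hreal := measurableEmbedding_embeddingReal (ℕ → Bool)
  exact ⟨unitInterval.sigmoid ∘ embeddingReal (ℕ → Bool) ∘ e,
    unitInterval.continuous_sigmoid.measurable.comp (hreal.measurable.comp he),
    unitInterval.sigmoid_injective.comp (hreal.injective.comp heinj)⟩

lemma measurableEq_of_countablySeparated [MeasurableSpace.CountablySeparated X] :
    MeasurableEq X where
  measurableSet_diagonal := by
    obtain ⟨u, hu, hinj⟩ := exists_measurable_injective_unitInterval (X := X)
    simpa only [Set.diagonal, comp_apply, hinj.eq_iff] using
      measurableSet_eq_fun (hu.comp measurable_fst) (hu.comp measurable_snd)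

theorem Hyperfinite.tailEquiv [MeasurableSpace.CountablySeparated X] (hf : Measurable f)
    {N : X → ℕ} (hN : Measurable N) (hfN : Injective fun x => (f x, N x)) :
    Hyperfinite (TailEquiv f) := by
  obtain ⟨u, hu, hinj⟩ := exists_measurable_injective_unitInterval (X := X)
  have := measurableEq_of_countablySeparated (X := X)
  exact .tailEquiv_of_markers hf hN hfN (measurableSet_liminfMarker hf hu) rfl
    antitone_liminfMarker (fun n _ => exists_iterate_mem_liminfMarker n)
    fun _ _ h => h.exists_hittingPoint_liminfMarker_eq hinj

end Measurability

end LiminfMarkers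

section Selectors

variable {X Y ι : Type*} [MeasurableSpace X] [MeasurableSpace Y]

/-- A Borel selector for `s`: a Borel map choosing one point in each class. -/
structure IsBorelSelector (s : Setoid X) (r : X → X) : Prop where
  measurable : Measurable r
  rel : ∀ x, s x (r x)
  eq_of_rel : ∀ x y, s x y → r x = r y

lemma exists_measurable_choice [Countable ι] [MeasurableSpace ι] {p : X → ι → Prop}
    (hp : ∀ i, MeasurableSet {x | p x i}) (hex : ∀ x, ∃ i, p x i) :
    ∃ j : X → ι, Measurable j ∧ ∀ x, p x (j x) := by
  classical
  rcases isEmpty_or_nonempty X with hX | ⟨⟨x₀⟩⟩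
  · exact ⟨isEmptyElim, measurable_of_empty _, isEmptyElim⟩
  have : Nonempty ι := (hex x₀).nonempty
  obtain ⟨e, he⟩ := exists_surjective_nat ι
  have hex' (x : X) : ∃ k, p x (e k) := he.exists.1 (hex x)
  exact ⟨fun x => e (Nat.find (hex' x)),
    (measurable_from_nat (f := e)).comp (measurable_find hex' fun k => hp (e k)),
    fun x => Nat.find_spec (hex' x)⟩

lemma exists_isBorelSelector_of_smoothRel [Countable ι] {s : Setoid X} {a : ι → X → X}
    (ha : ∀ i, Measurable (a i)) (hs : ∀ x y, s x y ↔ ∃ i, a i x = y) (hsmooth : SmoothRel s) :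
    ∃ r, IsBorelSelector s r := by
  let _ : MeasurableSpace ι := ⊤
  obtain ⟨B, hB, htrans⟩ := hsmooth
  obtain ⟨j, hj, hjB⟩ := exists_measurable_choice (p := fun x i => a i x ∈ B)
    (fun i => ha i hB) fun x => by
      obtain ⟨y, ⟨hyB, hxy⟩, -⟩ := htrans x
      obtain ⟨i, rfl⟩ := (hs x y).1 hxy
      exact ⟨i, hyB⟩
  have hrel (x : X) : s x (a (j x) x) := (hs _ _).2 ⟨j x, rfl⟩
  have hmeas : Measurable fun q : ι × X => a q.1 q.2 := measurable_from_prod_countable_right ha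
  exact ⟨fun x => a (j x) x, hmeas.comp (hj.prodMk measurable_id), hrel, fun x y hxy =>
    (htrans x).unique ⟨hjB x, hrel x⟩ ⟨hjB y, s.trans hxy (hrel y)⟩⟩

lemma countablySeparated_of_injective [MeasurableSpace.CountablySeparated Y]
    {e : X → Y} (he : Measurable e) (hinj : Injective e) :
    MeasurableSpace.CountablySeparated X := by
  obtain ⟨S, hS, hSmeas, hsep⟩ := exists_countable_separating Y MeasurableSet Set.univ
  refine ⟨⟨(e ⁻¹' ·) '' S, hS.image _, ?_, fun x _ y _ h => ?_⟩⟩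
  · exact Set.forall_mem_image.2 fun t ht => he (hSmeas t ht)
  · exact hinj (hsep _ trivial _ trivial (Set.forall_mem_image.1 h))

namespace IsBorelSelector

variable {s : Setoid X} {r : X → X}

/-- The section of the quotient map determined by a Borel selector. -/
def lift (h : IsBorelSelector s r) : Quotient s → X :=
  Quotient.lift r h.eq_of_rel

lemma measurable_lift (h : IsBorelSelector s r) : Measurable h.lift :=
  measurable_from_quotient.2 h.measurable

lemma mk_lift (h : IsBorelSelector s r) (q : Quotient s) : Quotient.mk s (h.lift q) = q :=
  q.inductionOn fun x => Quotient.sound (s.symm (h.rel x))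

lemma injective_lift (h : IsBorelSelector s r) : Injective h.lift :=
  LeftInverse.injective h.mk_lift

lemma countablySeparated_quotient [MeasurableSpace.CountablySeparated X]
    (h : IsBorelSelector s r) : MeasurableSpace.CountablySeparated (Quotient s) :=
  countablySeparated_of_injective h.measurable_lift h.injective_lift

lemma exists_injective_mk_prodMk [MeasurableEq X] [Countable ι] (h : IsBorelSelector s r)
    {a : ι → X → X} (ha : ∀ i, Measurable (a i)) (hs : ∀ x y, s x y ↔ ∃ i, a i x = y) :
    ∃ c : X → ℕ, Measurable c ∧ Injective fun x => (Quotient.mk s x, c x) := by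
  let _ : MeasurableSpace ι := ⊤
  obtain ⟨j, hj, hjr⟩ := exists_measurable_choice (p := fun x i => a i (r x) = x)
    (fun i => measurableSet_eq_fun ((ha i).comp h.measurable) measurable_id)
    fun x => (hs _ _).1 (s.symm (h.rel x))
  obtain ⟨e, he⟩ := exists_injective_nat ι
  refine ⟨e ∘ j, measurable_from_top.comp hj, fun x y hxy => ?_⟩
  obtain ⟨hclass, hcode⟩ := Prod.ext_iff.1 hxy
  rw [← hjr x, ← hjr y, he hcode, h.eq_of_rel x y (Quotient.exact hclass)]

variable {E : X → X → Prop} {E' : Quotient s → Quotient s → Prop}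

lemma quotient_iff (h : IsBorelSelector s r)
    (hE : ∀ x y, E' (Quotient.mk s x) (Quotient.mk s y) ↔ E x y) (q q' : Quotient s) :
    E' q q' ↔ E (h.lift q) (h.lift q') := by
  rw [← hE, h.mk_lift, h.mk_lift]

lemma borelBireducible_quotient (h : IsBorelSelector s r)
    (hE : ∀ x y, E' (Quotient.mk s x) (Quotient.mk s y) ↔ E x y) : BorelBireducible E' E :=
  ⟨⟨h.lift, h.measurable_lift, h.quotient_iff hE⟩,
    ⟨Quotient.mk s, measurable_quotient_mk'', fun x y => (hE x y).symm⟩⟩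

lemma hyperfinite_quotient (h : IsBorelSelector s r)
    (hE : ∀ x y, E' (Quotient.mk s x) (Quotient.mk s y) ↔ E x y) (hfin : Hyperfinite E) :
    Hyperfinite E' :=
  hfin.of_injective h.measurable_lift h.injective_lift (h.quotient_iff hE)

end IsBorelSelector

end Selectors

section Rays

variable {V : Type*} {T : SimpleGraph V} {v w : Geo T}

lemma iterate_geoShift_apply (m : ℕ) (v : Geo T) (i : ℕ) :
    ((geoShift T)^[m] v).1 i = v.1 (m + i) := by
  induction m generalizing v with
  | zero => simp
  | succ m ih => rw [iterate_succ_apply, ih, add_right_comm, geoShift]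

lemma eq_of_geoShift_eq (h0 : v.1 0 = w.1 0) (h : geoShift T v = geoShift T w) : v = w := by
  ext n
  cases n with
  | zero => exact h0
  | succ n => exact congrFun (congrArg Subtype.val h) n

lemma tailRel_iff_tailEquiv : tailRel T v w ↔ TailEquiv (geoShift T) v w :=
  eqvGen_iterate_iff_tailEquiv

lemma tailRel_iterate_geoShift (m : ℕ) (v : Geo T) : tailRel T v ((geoShift T)^[m] v) :=
  .rel _ _ ⟨m, rfl⟩

lemma apply_add_eq_of_iterate_geoShift_eq {m n : ℕ}
    (h : (geoShift T)^[m] v = (geoShift T)^[n] w) (i : ℕ) : v.1 (m + i) = w.1 (n + i) := by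
  rw [← iterate_geoShift_apply, h, iterate_geoShift_apply]

lemma exists_walk_getVert_eq {u : ℕ → V} (hu : ∀ n, T.Adj (u n) (u (n + 1))) (m : ℕ) :
    ∃ p : T.Walk (u 0) (u m), p.length = m ∧ ∀ i ≤ m, p.getVert i = u i := by
  induction m generalizing u with
  | zero => exact ⟨.nil, rfl, fun i hi => by simp [Nat.le_zero.1 hi]⟩
  | succ m ih =>
    obtain ⟨p, hlen, hp⟩ := ih fun n => hu (n + 1)
    refine ⟨.cons (hu 0) p, by simp [hlen], fun i hi => ?_⟩
    cases i with
    | zero => simp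
    | succ i => rw [SimpleGraph.Walk.getVert_cons_succ, hp i (by omega)]

lemma exists_isPath_getVert_eq (v : Geo T) (m : ℕ) :
    ∃ p : T.Walk (v.1 0) (v.1 m), p.IsPath ∧ ∀ i ≤ m, p.getVert i = v.1 i := by
  obtain ⟨p, hlen, hp⟩ := exists_walk_getVert_eq v.2.2 m
  refine ⟨p, (SimpleGraph.Walk.IsPath.getVert_injOn_iff p).1 fun i hi j hj hij => ?_, hp⟩
  simp only [Set.mem_ofPred_eq, hlen] at hi hj
  rw [hp i hi, hp j hj] at hij
  exact v.2.1 hij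

lemma connectedComponentMk_apply_zero_eq (h : tailRel T v w) :
    T.connectedComponentMk (v.1 0) = T.connectedComponentMk (w.1 0) := by
  have hray (u : Geo T) (m : ℕ) :
      T.connectedComponentMk (u.1 0) = T.connectedComponentMk (u.1 m) :=
    (exists_isPath_getVert_eq u m).elim fun p _ => SimpleGraph.ConnectedComponent.sound ⟨p⟩
  obtain ⟨m, n, hmn⟩ := tailRel_iff_tailEquiv.1 h
  rw [hray v (m + 0), apply_add_eq_of_iterate_geoShift_eq hmn, ← hray w]

lemma exists_geoShift_eq {a : V} (ha : T.Adj a (v.1 0)) (hv : a ∉ Set.range v.1) :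
    ∃ w : Geo T, geoShift T w = v ∧ w.1 0 = a := by
  refine ⟨⟨fun n => n.casesOn a v.1, fun m n hmn => ?_, fun n => ?_⟩, rfl, rfl⟩
  · match m, n, hmn with
    | 0, 0, _ => rfl
    | 0, n + 1, h => exact (hv ⟨n, h.symm⟩).elim
    | m + 1, 0, h => exact (hv ⟨m, h⟩).elim
    | m + 1, n + 1, h => exact congrArg _ (v.2.1 h)
  · cases n with
    | zero => exact ha
    | succ n => exact v.2.2 n

lemma exists_tailRel_apply_zero_eq {a : V} (ha : T.Reachable a (v.1 0)) :
    ∃ w, tailRel T v w ∧ w.1 0 = a := by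
  rw [SimpleGraph.reachable_iff_reflTransGen] at ha
  induction ha using Relation.ReflTransGen.head_induction_on with
  | refl => exact ⟨v, .refl v, rfl⟩
  | @head a b hab _ ih =>
    obtain ⟨w, hvw, rfl⟩ := ih
    by_cases hw : a ∈ Set.range w.1
    · obtain ⟨k, rfl⟩ := hw
      exact ⟨_, hvw.trans _ _ _ (tailRel_iterate_geoShift k w), iterate_geoShift_apply k w 0⟩
    · obtain ⟨w', rfl, hw'⟩ := exists_geoShift_eq hab hw
      exact ⟨w', hvw.trans _ _ _ (.symm _ _ (tailRel_iterate_geoShift 1 w')), hw'⟩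

variable (T) in
/-- The shadow of `x` at distance `j` from `a`: the endpoints of the paths from `a` whose `j`-th
vertex is `x`. Since `getVert` is constant past the end of a path, short paths ending at `x` are
included. -/
def shadow (a : V) (j : ℕ) (x : V) : Set V :=
  {y | ∃ p : T.Walk a y, p.IsPath ∧ p.getVert j = x}

lemma apply_mem_shadow_iff (hT : T.IsAcyclic) (v : Geo T) {j m : ℕ} (hjm : j ≤ m) {x : V} :
    v.1 m ∈ shadow T (v.1 0) j x ↔ v.1 j = x := by
  obtain ⟨p, hp, hpv⟩ := exists_isPath_getVert_eq v m
  rw [← hpv j hjm]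
  refine ⟨fun ⟨q, hq, hqx⟩ => ?_, fun hx => ⟨p, hp, hx⟩⟩
  have hpq : p = q := congrArg Subtype.val ((hT.subsingleton_path _ _).elim ⟨p, hp⟩ ⟨q, hq⟩)
  rw [hpq, hqx]

lemma apply_eq_iff_eventually_mem_shadow (hT : T.IsAcyclic) (h : tailRel T v w) {j : ℕ} {x : V} :
    w.1 j = x ↔ ∀ᶠ k in atTop, v.1 k ∈ shadow T (w.1 0) j x := by
  obtain ⟨m, n, hmn⟩ := tailRel_iff_tailEquiv.1 h
  have hshadow : ∀ᶠ k in atTop, v.1 k ∈ shadow T (w.1 0) j x ↔ w.1 j = x := by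
    filter_upwards [eventually_ge_atTop (m + j)] with k hk
    obtain ⟨i, rfl⟩ := Nat.exists_eq_add_of_le (show m ≤ k by omega)
    rw [apply_add_eq_of_iterate_geoShift_eq hmn, apply_mem_shadow_iff hT w (by omega)]
  rw [eventually_congr hshadow, eventually_const]

lemma eq_of_tailRel_of_apply_zero_eq (hT : T.IsAcyclic) (h : tailRel T v w)
    (h0 : v.1 0 = w.1 0) : v = w := by
  ext j
  refine ((apply_eq_iff_eventually_mem_shadow hT h).2 ?_).symm
  rw [← h0]
  exact (apply_eq_iff_eventually_mem_shadow hT (.refl v)).1 rfl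

section Measurability

variable [MeasurableSpace V]

lemma measurable_geoShift : Measurable (geoShift T) := by
  refine Measurable.subtype_mk (measurable_pi_iff.2 fun n => ?_)
  exact (measurable_pi_apply (n + 1)).comp measurable_subtype_coe

lemma measurable_geoSmul [DiscreteMeasurableSpace V] {G : Type*} [Group G] [MulAction G V]
    (hact : IsGraphAction T G) (g : G) : Measurable (geoSmul hact g) := by
  refine Measurable.subtype_mk (measurable_pi_iff.2 fun n => ?_)
  exact (Measurable.of_discrete (f := (g • · : V → V))).comp
    ((measurable_pi_apply n).comp measurable_subtype_coe)

lemma measurable_geo_apply (n : ℕ) : Measurable fun v : Geo T => v.1 n :=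
  (measurable_pi_apply n).comp measurable_subtype_coe

theorem exists_isBorelSelector_tailSetoid [Countable V] [DiscreteMeasurableSpace V]
    (hT : T.IsAcyclic) : ∃ r, IsBorelSelector (tailSetoid T) r := by
  let root (a : V) : V := (T.connectedComponentMk a).out
  have hroot (a : V) : T.Reachable (root a) a :=
    SimpleGraph.ConnectedComponent.exact (Quot.out_eq _)
  choose r hr hr0 using fun v : Geo T => exists_tailRel_apply_zero_eq (hroot (v.1 0))
  refine ⟨r, Measurable.subtype_mk (measurable_pi_iff.2 fun j => ?_), hr, fun v w hvw => ?_⟩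
  · refine measurable_to_countable' fun x => ?_
    have hpre : (fun v => (r v).1 j) ⁻¹' {x} =
        liminf (fun k => {v : Geo T | v.1 k ∈ shadow T (root (v.1 0)) j x}) atTop := by
      ext v
      rw [mem_liminf_iff_eventually_mem, Set.mem_preimage, Set.mem_singleton_iff,
        apply_eq_iff_eventually_mem_shadow hT (hr v), hr0]
      rfl
    rw [hpre]
    exact .measurableSet_liminf fun k =>
      ((measurable_geo_apply k).prodMk (measurable_geo_apply 0))
        (MeasurableSet.of_discrete (s := {q : V × V | q.1 ∈ shadow T (root q.2) j x}))
  · have htail : tailRel T (r v) (r w) :=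
      ((hr v).symm.trans _ _ _ hvw).trans _ _ _ (hr w)
    refine eq_of_tailRel_of_apply_zero_eq hT htail ?_
    rw [hr0, hr0]
    exact congrArg Quot.out (connectedComponentMk_apply_zero_eq hvw)

end Measurability

end Rays

section OrbitRelations

variable {V : Type*} {T : SimpleGraph V} {G : Type*} [Group G] [MulAction G V]
  {hact : IsGraphAction T G} {v w : Geo T}

lemma iterate_shiftQuotG_mk (m : ℕ) (v : Geo T) :
    (shiftQuotG hact)^[m] (Quotient.mk _ v) = Quotient.mk _ ((geoShift T)^[m] v) :=
  ((show Semiconj (Quotient.mk (geoSetoidG hact)) (geoShift T) (shiftQuotG hact) from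
    fun _ => rfl).iterate_right m v).symm

lemma shiftQuotRel_mk_iff_exists_geoRel :
    shiftQuotRel hact (Quotient.mk _ v) (Quotient.mk _ w) ↔
      ∃ m n, geoRel hact ((geoShift T)^[m] v) ((geoShift T)^[n] w) := by
  refine eqvGen_iterate_iff_tailEquiv.trans (exists_congr fun m => exists_congr fun n => ?_)
  rw [iterate_shiftQuotG_mk, iterate_shiftQuotG_mk]
  exact Quotient.eq (r := geoSetoidG hact)

lemma shiftQuotRel_mk_of_geoRelGN (h : geoRelGN hact v w) :
    shiftQuotRel hact (Quotient.mk _ v) (Quotient.mk _ w) := by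
  induction h with
  | rel v w hvw =>
    obtain ⟨⟨g, m⟩, rfl⟩ := hvw
    exact shiftQuotRel_mk_iff_exists_geoRel.2 ⟨m, 0, g, rfl⟩
  | refl v => exact .refl _
  | symm v w _ ih => exact ih.symm
  | trans u v w _ _ huv hvw => exact huv.trans _ _ _ hvw

lemma geoRelGN_iff_exists_geoRel :
    geoRelGN hact v w ↔ ∃ m n, geoRel hact ((geoShift T)^[m] v) ((geoShift T)^[n] w) := by
  refine ⟨fun h => shiftQuotRel_mk_iff_exists_geoRel.1 (shiftQuotRel_mk_of_geoRelGN h), ?_⟩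
  rintro ⟨m, n, g, hg⟩
  refine .trans _ ((geoShift T)^[n] w) _ (.rel _ _ ⟨(g, m), hg.symm⟩) (.symm _ _ ?_)
  exact .rel _ _ ⟨(1, n), (geoSmul_one hact _).symm⟩

lemma shiftQuotRel_mk_iff :
    shiftQuotRel hact (Quotient.mk _ v) (Quotient.mk _ w) ↔ geoRelGN hact v w :=
  shiftQuotRel_mk_iff_exists_geoRel.trans geoRelGN_iff_exists_geoRel.symm

lemma bdryRel_mk_iff :
    bdryRel hact (Quotient.mk (tailSetoid T) v) (Quotient.mk (tailSetoid T) w) ↔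
      geoRelGN hact v w := by
  have hmk (g : G) : bdrySmul hact g (Quotient.mk (tailSetoid T) v) =
      Quotient.mk (tailSetoid T) w ↔ ∃ m n, geoSmul hact g ((geoShift T)^[m] v) =
        (geoShift T)^[n] w := by
    simp only [← iterate_geoShift_geoSmul]
    exact (Quotient.eq (r := tailSetoid T)).trans tailRel_iff_tailEquiv
  rw [geoRelGN_iff_exists_geoRel]
  simp only [bdryRel, hmk, geoRel]
  exact exists_comm.trans (exists_congr fun m => exists_comm)

variable [MeasurableSpace V]

lemma measurable_shiftQuotG : Measurable (shiftQuotG hact) :=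
  measurable_from_quotient.2 (measurable_quotient_mk''.comp measurable_geoShift)

variable [Countable V] [DiscreteMeasurableSpace V]

/- The shift on `Geo(T)/G` is countable-to-one: for a selected ray `v`, the class of `geoShift T v`
together with the position of `geoShift T v` in its class and the origin of `v` determines `v`. -/
theorem hyperfinite_shiftQuotRel {r : Geo T → Geo T} (hr : IsBorelSelector (geoSetoidG hact) r)
    {c : Geo T → ℕ} (hc : Measurable c)
    (hcinj : Injective fun v => (Quotient.mk (geoSetoidG hact) v, c v)) :
    Hyperfinite (shiftQuotRel hact) := by
  obtain ⟨e, he⟩ := exists_injective_nat V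
  have := hr.countablySeparated_quotient
  let code (q : GeoQuotG hact) : ℕ :=
    Nat.pair (c (geoShift T (hr.lift q))) (e ((hr.lift q).1 0))
  have hcode : Measurable code :=
    (Measurable.of_discrete (f := fun k : ℕ × ℕ => Nat.pair k.1 k.2)).comp
      ((hc.comp (measurable_geoShift.comp hr.measurable_lift)).prodMk
        (Measurable.of_discrete.comp ((measurable_geo_apply 0).comp hr.measurable_lift)))
  have hshift (q : GeoQuotG hact) :
      Quotient.mk _ (geoShift T (hr.lift q)) = shiftQuotG hact q :=
    congrArg (shiftQuotG hact) (hr.mk_lift q)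
  have hinj : Injective fun q => (shiftQuotG hact q, code q) := fun q q' h => by
    obtain ⟨hclass, hpair⟩ := Prod.ext_iff.1 h
    obtain ⟨hposition, horigin⟩ := Nat.pair_eq_pair.1 hpair
    refine hr.injective_lift (eq_of_geoShift_eq (he horigin) (hcinj (Prod.ext ?_ hposition)))
    exact (hshift q).trans (hclass.trans (hshift q').symm)
  have hrel : shiftQuotRel hact = TailEquiv (shiftQuotG hact) :=
    funext₂ fun _ _ => propext eqvGen_iterate_iff_tailEquiv
  rw [hrel]
  exact .tailEquiv measurable_shiftQuotG hcode hinj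

end OrbitRelations

theorem boundary_hyperfinite_of_smooth_geo_action_general
    {V : Type*} [Countable V] [MeasurableSpace V] [DiscreteMeasurableSpace V]
    (T : SimpleGraph V) (hT : T.IsAcyclic)
    {G : Type*} [Group G] [Countable G] [MulAction G V]
    (hact : IsGraphAction T G)
    (hsmooth : SmoothRel (geoRel hact)) :
    BorelBireducible (bdryRel hact) (geoRelGN hact) ∧
    BorelBireducible (geoRelGN hact) (shiftQuotRel hact) ∧
    Hyperfinite (shiftQuotRel hact) ∧
    Hyperfinite (bdryRel hact) := by
  have hgeo := measurable_geoSmul hact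
  have horbit (v w : Geo T) : geoSetoidG hact v w ↔ ∃ g, geoSmul hact g v = w := Iff.rfl
  have := measurableEq_of_countablySeparated (X := Geo T)
  obtain ⟨r, hr⟩ := exists_isBorelSelector_of_smoothRel hgeo horbit hsmooth
  obtain ⟨c, hc, hcinj⟩ := hr.exists_injective_mk_prodMk hgeo horbit
  obtain ⟨ρ, hρ⟩ := exists_isBorelSelector_tailSetoid hT
  have hquot : Hyperfinite (shiftQuotRel hact) := hyperfinite_shiftQuotRel hr hc hcinj
  have hGN : Hyperfinite (geoRelGN hact) :=
    hquot.comap measurable_quotient_mk'' hc hcinj fun v w => shiftQuotRel_mk_iff.symm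
  exact ⟨hρ.borelBireducible_quotient fun v w => bdryRel_mk_iff,
    (hr.borelBireducible_quotient fun v w => shiftQuotRel_mk_iff).symm,
    hquot, hρ.hyperfinite_quotient (fun v w => bdryRel_mk_iff) hGN⟩

theorem boundary_hyperfinite_of_smooth_geo_action
    {V : Type*} [Countable V] [MeasurableSpace V] [DiscreteMeasurableSpace V]
    (T : SimpleGraph V) (hT : T.IsTree)
    {G : Type*} [Group G] [Countable G] [MulAction G V]
    (hact : IsGraphAction T G)
    (hsmooth : SmoothRel (geoRel hact)) :
    BorelBireducible (bdryRel hact) (geoRelGN hact) ∧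
    BorelBireducible (geoRelGN hact) (shiftQuotRel hact) ∧
    Hyperfinite (shiftQuotRel hact) ∧
    Hyperfinite (bdryRel hact) :=
  boundary_hyperfinite_of_smooth_geo_action_general T hT.isAcyclic hact hsmooth
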